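/- Let V be a representation of the Yangian Y(gl_n) with T_{ij}^{(r)} = 0 for all r ≥ 3, and let 1 ≤ a < n−1. Then: (i) for every integer k ≥ 1 and every complex number v, [T_{n−1,n}^{(1)}, 𝒯_{na}(v,k)] = −k · 𝒯_{na}(v,k−1) · T^{a+1⋯n}_{a⋯n−2,n}(v+k−1) as an identity in End(V) (equivalently, as End(V)-valued polynomials in v); and (ii) T^{a+1⋯n}_{a⋯n−2,n}(u) · T^{a+1⋯n−1}_{a+1⋯n−1}(u) = τ_{n−1,a}(u) · T^{a+1⋯n}_{a+1⋯n}(u) + τ_{na}(u) · T^{a+1⋯n−1}_{a+1⋯n−2,n}(u) as End(V)-valued polynomials in u. -/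

import Mathlib

/-- A representation of the Yangian `Y(gl_n)` on a complex vector space `V`:
a family of operators `T r i j` (`r ≥ 1`), with `T 0 i j = δ_{ij}·id`,
satisfying the defining relations
`[T^{(r+1)}_{ij}, T^{(s)}_{kl}] − [T^{(r)}_{ij}, T^{(s+1)}_{kl}]
  = T^{(r)}_{kj} T^{(s)}_{il} − T^{(s)}_{kj} T^{(r)}_{il}`. -/
def IsYangianRep (n : ℕ) {V : Type*} [AddCommGroup V] [Module ℂ V]
    (T : ℕ → Fin n → Fin n → (V →ₗ[ℂ] V)) : Prop :=
  (∀ i j : Fin n, T 0 i j = if i = j then LinearMap.id else 0) ∧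
  (∀ r s : ℕ, ∀ i j k l : Fin n,
    (T (r + 1) i j ∘ₗ T s k l - T s k l ∘ₗ T (r + 1) i j)
      - (T r i j ∘ₗ T (s + 1) k l - T (s + 1) k l ∘ₗ T r i j)
    = T r k j ∘ₗ T s i l - T s k j ∘ₗ T r i l)

/-- The polynomial operator `T_{ij}(u) = u² δ_{ij}·id + u T^{(1)}_{ij} + T^{(2)}_{ij}`
(in a representation with `T^{(r)} = 0` for `r ≥ 3`). -/
noncomputable def Tpoly {n : ℕ} {V : Type*} [AddCommGroup V] [Module ℂ V]
    (T : ℕ → Fin n → Fin n → (V →ₗ[ℂ] V)) (i j : Fin n) (u : ℂ) : V →ₗ[ℂ] V :=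
  u ^ 2 • (if i = j then (LinearMap.id : V →ₗ[ℂ] V) else 0) + u • T 1 i j + T 2 i j

/-- The polynomial quantum minor `T^{a_1⋯a_l}_{b_1⋯b_l}(u)
= Σ_{σ ∈ S_l} sgn σ · T_{a_{σ(1)} b_1}(u) T_{a_{σ(2)} b_2}(u−1) ⋯
T_{a_{σ(l)} b_l}(u−l+1)`. -/
noncomputable def TqminorPoly {n : ℕ} {V : Type*} [AddCommGroup V] [Module ℂ V]
    (T : ℕ → Fin n → Fin n → (V →ₗ[ℂ] V)) (l : ℕ) (a b : Fin l → Fin n)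
    (u : ℂ) : V →ₗ[ℂ] V :=
  ∑ σ : Equiv.Perm (Fin l),
    (((Equiv.Perm.sign σ : ℤ) : ℂ)) •
      (List.ofFn fun s : Fin l =>
        Tpoly T (a (σ s)) (b s) (u - ((s : ℕ) : ℂ))).foldr (· ∘ₗ ·) LinearMap.id

/-- The sequence of `0`-indexed row (or column) indices `off, off+1, …, off+l-1`. -/
def idxSeq (n off l : ℕ) (h : off + l ≤ n) : Fin l → Fin n :=
  fun s => ⟨off + s.1, by have := s.isLt; omega⟩

/-- The sequence of `0`-indexed indices `off, off+1, …, off+l-2, n-1`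
(the last index replaced by `n-1`). -/
def idxSeqLast (n off l : ℕ) (h : off + l ≤ n) (hn : 1 ≤ n) : Fin l → Fin n :=
  fun s => if s.1 = l - 1 then ⟨n - 1, by omega⟩
    else ⟨off + s.1, by have := s.isLt; omega⟩

/-- The lowering operator `τ_{ra}(v) = T^{a+1⋯r}_{a⋯r−1}(v)`
(`1 ≤ a < r ≤ n`, indices in `1, …, n` as in the paper). -/
noncomputable def tauPoly {n : ℕ} {V : Type*} [AddCommGroup V] [Module ℂ V]
    (T : ℕ → Fin n → Fin n → (V →ₗ[ℂ] V)) (r a : ℕ)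
    (ha : 1 ≤ a) (har : a < r) (hr : r ≤ n) (v : ℂ) : V →ₗ[ℂ] V :=
  TqminorPoly T (r - a) (idxSeq n a (r - a) (by omega))
    (idxSeq n (a - 1) (r - a) (by omega)) v

/-- The product of lowering operators
`𝒯_{ra}(v, k) = τ_{ra}(v+k−1) ⋯ τ_{ra}(v+1) τ_{ra}(v)`
(the identity operator when `k = 0`). -/
noncomputable def TTPoly {n : ℕ} {V : Type*} [AddCommGroup V] [Module ℂ V]
    (T : ℕ → Fin n → Fin n → (V →ₗ[ℂ] V)) (r a : ℕ)
    (ha : 1 ≤ a) (har : a < r) (hr : r ≤ n) (v : ℂ) : ℕ → (V →ₗ[ℂ] V)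
  | 0 => LinearMap.id
  | k + 1 => tauPoly T r a ha har hr (v + (k : ℂ)) ∘ₗ TTPoly T r a ha har hr v k

/-!
A matrix `t i j u` over a noncommutative ring `R` defines, for each column `b`, an operator
`ψ_b(u)` on `R`-valued functions of lists of rows: exterior multiplication by the one-form
`i ↦ t i b u`. The quantum minor with columns `b₁, …, b_l` is `ψ_{b₁}(u) ψ_{b₂}(u - 1) ⋯` applied to
the vacuum. The RTT relation gives an exchange relation for `ψ_b(u)` and `ψ_c(v)`, which at
`v = u - 1` says that `ψ_b(u) ψ_c(u - 1)` is antisymmetric in `b, c`; this makes quantum minors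
alternating in their columns.

An induction on the columns then commutes an entry `t k b u` with a quantum minor at `v`. The
induction divides by `u - v + m` for positive integers `m`, so it only works for generic `u`; since
the entries are polynomial in `u`, the result extends to all `u`. If `k` is a row of the minor,
moving `t k b u` through it creates the sum of the minors in which one column is exchanged with
`b`. Expanding a second minor along its first column turns this into a relation between two minors;
at `u = v` it is identity (ii).

For (i), `T_{n-1,n}^{(1)}` commutes with the entries like a matrix unit, hence its commutator with
`τ_{na}(v)` is minus the minor with last column `n` instead of `n - 1`. In an induction on `k` the
derivation property gives two terms, and the relation between two minors at `v` and `v + k` merges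
them into one.
-/

namespace Yangian

section PolynomialMap

/-- The `W`-valued functions `u ↦ w₀ + u • w₁ + ⋯ + u ^ d • w_d` on `K`. They serve to extend
identities between operator-valued functions from infinitely many points to all of `K`. -/
noncomputable def polynomialMap (K W : Type*) [CommRing K] [AddCommGroup W] [Module K W] :
    Submodule K (K → W) :=
  LinearMap.range (LinearMap.pi fun u ↦ PolynomialModule.eval u)

section CommRing

variable {K W W' : Type*} [CommRing K] [AddCommGroup W] [Module K W] [AddCommGroup W'] [Module K W']

theorem pow_smul_mem_polynomialMap (m : ℕ) (w : W) :
    (fun u : K ↦ u ^ m • w) ∈ polynomialMap K W :=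
  ⟨PolynomialModule.single K m w, funext fun u ↦ PolynomialModule.eval_single u m w⟩

theorem linearMap_comp_mem_polynomialMap (φ : W →ₗ[K] W') {f : K → W}
    (hf : f ∈ polynomialMap K W) : (fun u ↦ φ (f u)) ∈ polynomialMap K W' := by
  obtain ⟨P, rfl⟩ := hf
  exact ⟨PolynomialModule.map K φ P, funext fun u ↦ PolynomialModule.eval_map K φ P u⟩

theorem sub_smul_mem_polynomialMap (a : K) {f : K → W} (hf : f ∈ polynomialMap K W) :
    (fun u ↦ (u - a) • f u) ∈ polynomialMap K W := by
  obtain ⟨P, rfl⟩ := hf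
  exact ⟨(Polynomial.X - Polynomial.C a) • P,
    funext fun u ↦ by simp [PolynomialModule.eval_smul]⟩

end CommRing

theorem eq_zero_of_infinite_zeros {K W : Type*} [Field K] [AddCommGroup W] [Module K W]
    {f : K → W} (hf : f ∈ polynomialMap K W) (hzeros : {u | f u = 0}.Infinite) : f = 0 := by
  obtain ⟨P, rfl⟩ := hf
  funext u
  refine (Module.forall_dual_apply_eq_zero_iff K _).1 fun φ ↦ ?_
  let Q := PolynomialModule.equivPolynomialSelf (PolynomialModule.map K φ P)
  have hQ (z : K) : Q.eval z = φ (PolynomialModule.eval z P) := by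
    simp only [Q, ← PolynomialModule.eval_map K φ P z]
    induction PolynomialModule.map K φ P using PolynomialModule.induction_linear with
    | zero => simp
    | add p q hp hq => simp_all
    | single i c => simp [mul_comm]
  have hQ0 : Q = 0 := Q.eq_zero_of_infinite_isRoot <| hzeros.mono fun z hz ↦ by
    simp_all [Polynomial.IsRoot]
  simpa [hQ0] using (hQ u).symm

end PolynomialMap

section Alternating

variable {α G : Type*} [AddCommGroup G]

/-- A function of lists that changes sign when two adjacent entries are exchanged; quantum minors
have this property both in their rows and in their columns. -/
def IsAlternating (F : List α → G) : Prop :=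
  ∀ X a b Y, F (X ++ a :: b :: Y) = -F (X ++ b :: a :: Y)

namespace IsAlternating

variable {F : List α → G}

theorem cons (hF : IsAlternating F) (a : α) : IsAlternating fun A ↦ F (a :: A) :=
  fun X ↦ hF (a :: X)

theorem cons_eq_zero [IsAddTorsionFree G] (hF : IsAlternating F) {k : α} {A : List α}
    (hk : k ∈ A) : F (k :: A) = 0 := by
  induction A generalizing F with
  | nil => simp at hk
  | cons a A ih =>
    have hswap : F (k :: a :: A) = -F (a :: k :: A) := hF [] k a A
    rcases List.mem_cons.1 hk with rfl | hk
    · exact self_eq_neg.1 hswap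
    · rw [hswap, ih (hF.cons a) hk, neg_zero]

theorem append_cons (hF : IsAlternating F) (k : α) (X Y : List α) :
    F (X ++ k :: Y) = (-1 : ℤ) ^ X.length • F (k :: (X ++ Y)) := by
  induction X generalizing F with
  | nil => simp
  | cons x X ih =>
    have hswap : F (x :: k :: (X ++ Y)) = -F (k :: x :: (X ++ Y)) := hF [] x k _
    simp [ih (hF.cons x), hswap, pow_succ]

theorem cons_set (hF : IsAlternating F) (a b : α) {B : List α} {s : ℕ} (hs : s < B.length) :
    F (a :: B.set s b) = -F (b :: B.set s a) := by
  induction B generalizing F s with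
  | nil => simp at hs
  | cons e B ih =>
    cases s with
    | zero => exact hF [] a b B
    | succ s =>
      calc F (a :: e :: B.set s b) = -F (e :: a :: B.set s b) := hF [] a e _
        _ = F (e :: b :: B.set s a) := by
          rw [ih (hF.cons e) (by simpa using hs), neg_neg]
        _ = -F (b :: e :: B.set s a) := hF [] e b _

end IsAlternating

end Alternating

section Wedge

variable (K : Type*) {I R : Type*} [CommRing K] [Ring R] [Algebra K R]

/-- The value at a list of rows of the exterior product `wedge τ F`, expanded along the slot
filled by `τ`. -/
def wedgeAt : List I → (I → R) →ₗ[K] (List I → R) →ₗ[K] R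
  | [] => 0
  | a :: A => (LinearMap.mul K R).compl₁₂ (.proj a) (.proj A) -
      (wedgeAt A).compl₂ (.funLeft K R (List.cons a))

/-- Exterior multiplication by the one-form `τ` on `R`-valued functions of lists,
`(τ ∧ F) [a₀, …, a_l] = ∑ i, (-1) ^ i • (τ a_i * F [a₀, …, a_{i-1}, a_{i+1}, …, a_l])`: the
expansion of a quantum minor along its first column. -/
def wedge : (I → R) →ₗ[K] (List I → R) →ₗ[K] List I → R :=
  LinearMap.mk₂ K (fun τ F A ↦ wedgeAt K A τ F) (by intros; ext; simp) (by intros; ext; simp)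
    (by intros; ext; simp) (by intros; ext; simp)

/-- Interior multiplication: the row `k` is put in the first place. -/
def contract (k : I) : (List I → R) →ₗ[K] List I → R :=
  .funLeft K R (List.cons k)

local notation "κ" => Function.const _

variable {K}

@[simp]
theorem wedge_nil (τ : I → R) (F : List I → R) : wedge K τ F [] = 0 := rfl

theorem wedge_cons (τ : I → R) (F : List I → R) (a : I) (A : List I) :
    wedge K τ F (a :: A) = τ a * F A - wedge K τ (contract K a F) A := rfl

theorem contract_apply (k : I) (F : List I → R) (A : List I) : contract K k F A = F (k :: A) := rfl

theorem contract_wedge (k : I) (τ : I → R) (F : List I → R) :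
    contract K k (wedge K τ F) = κ (τ k) * F - wedge K τ (contract K k F) := rfl

theorem contract_mul_const (k : I) (r : R) (F : List I → R) :
    contract K k (F * κ r) = contract K k F * κ r := rfl

theorem contract_const_mul (k : I) (r : R) (F : List I → R) :
    contract K k (κ r * F) = κ r * contract K k F := rfl

theorem wedge_mul_const (τ : I → R) (F : List I → R) (r : R) :
    wedge K τ (F * κ r) = wedge K τ F * κ r := by
  ext A
  induction A generalizing F with
  | nil => simp
  | cons a A ih => simp [wedge_cons, contract_mul_const, ih, sub_mul, mul_assoc]

theorem wedge_const_mul_left (r : R) (τ : I → R) (F : List I → R) :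
    wedge K (κ r * τ) F = κ r * wedge K τ F := by
  ext A
  induction A generalizing F with
  | nil => simp
  | cons a A ih => simp [wedge_cons, ih, mul_sub, mul_assoc]

theorem wedge_mul_const_left (τ : I → R) (r : R) (F : List I → R) :
    wedge K (τ * κ r) F = wedge K τ (κ r * F) := by
  ext A
  induction A generalizing F with
  | nil => simp
  | cons a A ih => simp [wedge_cons, contract_const_mul, ih, mul_assoc]

theorem wedge_congr {τ σ : I → R} {F G : List I → R} {A : List I} (hτ : ∀ i ∈ A, τ i = σ i)
    (hF : ∀ A' ⊆ A, F A' = G A') : wedge K τ F A = wedge K σ G A := by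
  induction A generalizing F G with
  | nil => rfl
  | cons a A ih =>
    rw [wedge_cons, wedge_cons, hτ a (by simp), hF A (by simp),
      ih (F := contract K a F) (G := contract K a G) (fun i hi ↦ hτ i (by simp [hi]))
        fun A' hA' ↦ hF _ (List.cons_subset_cons a hA')]

theorem wedge_wedge_of_commute {τ σ : I → R} (h : ∀ i j, Commute (τ i) (σ j)) (F : List I → R) :
    wedge K τ (wedge K σ F) = -wedge K σ (wedge K τ F) := by
  ext A
  induction A generalizing F with
  | nil => simp
  | cons a A ih =>
    have hτ : κ (τ a) * σ = σ * κ (τ a) := funext fun i ↦ h a i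
    have hσ : κ (σ a) * τ = τ * κ (σ a) := funext fun i ↦ (h i a).symm
    have hτF := congrFun (wedge_const_mul_left (K := K) (τ a) σ F) A
    have hσF := congrFun (wedge_const_mul_left (K := K) (σ a) τ F) A
    simp only [hτ, hσ, wedge_mul_const_left, Pi.mul_apply, Function.const_apply] at hτF hσF
    simp only [wedge_cons, Pi.neg_apply, contract_wedge, map_sub, Pi.sub_apply, ih, hτF, hσF]
    abel

theorem IsAlternating.wedge {F : List I → R} (hF : IsAlternating F) (τ : I → R) :
    IsAlternating (wedge K τ F) := by
  intro X
  induction X generalizing F with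
  | nil =>
    intro a b Y
    have hswap : contract K b (contract K a F) = -contract K a (contract K b F) :=
      funext fun A ↦ hF [] a b A
    simp only [List.nil_append, wedge_cons, contract_apply, hswap, map_neg, Pi.neg_apply]
    abel
  | cons x X ih =>
    intro a b Y
    simp only [List.cons_append, wedge_cons, hF X a b Y, ih (F := contract K x F) (hF.cons x) a b Y,
      mul_neg, neg_sub_neg, neg_sub]

theorem IsAlternating.wedge_contract [IsAddTorsionFree R] {F : List I → R} (hF : IsAlternating F)
    (τ : I → R) {k : I} {A : List I} (hk : k ∈ A) :
    Yangian.wedge K τ (contract K k F) A = τ k * F A := by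
  rw [eq_comm, ← sub_eq_zero, ← wedge_cons]
  exact (hF.wedge τ).cons_eq_zero hk

theorem wedge_ofFn (τ : I → R) (F : List I → R) {l : ℕ} (a : Fin (l + 1) → I) :
    wedge K τ F (List.ofFn a) = ∑ i : Fin (l + 1),
      (-1 : K) ^ (i : ℕ) • (τ (a i) * F (List.ofFn fun s ↦ a (i.succAbove s))) := by
  induction l generalizing F with
  | zero => simp [wedge_cons]
  | succ l ih =>
    rw [List.ofFn_succ, wedge_cons, ih, Fin.sum_univ_succ (n := l + 1), sub_eq_add_neg,
      ← Finset.sum_neg_distrib]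
    simp [contract_apply, pow_succ]

end Wedge

section RTT

variable {K I J R : Type*} [CommRing K] [Ring R] [Algebra K R] {t : I → J → K → R}

local notation "κ" => Function.const _

/-- The defining relations of the Yangian in terms of generating functions `t i j u`. -/
def IsRTT (t : I → J → K → R) : Prop :=
  ∀ i j k l u v, (u - v) • (t i j u * t k l v - t k l v * t i j u) =
    t k j u * t i l v - t k j v * t i l u

/-- Exterior multiplication by the `b`-th column of the matrix `t u`. -/
def creation (t : I → J → K → R) (b : J) (u : K) : (List I → R) →ₗ[K] List I → R :=
  wedge K fun i ↦ t i b u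

theorem creation_mul_const (b : J) (u : K) (F : List I → R) (r : R) :
    creation t b u (F * κ r) = creation t b u F * κ r :=
  wedge_mul_const _ _ _

/-- The quantum minor of `t` with columns `B`, as a function of the list of its rows: the value
at the vacuum of the product of the operators `creation t b (u - s)`, where `b` is the `s`-th
entry of `B`. -/
def qminor (t : I → J → K → R) : List J → K → List I → R
  | [], _ => fun A ↦ if A.isEmpty then 1 else 0
  | b :: B, u => creation t b u (qminor t B (u - 1))

theorem qminor_cons (b : J) (B : List J) (u : K) :
    qminor t (b :: B) u = creation t b u (qminor t B (u - 1)) := rfl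

theorem isAlternating_qminor_rows (B : List J) (u : K) : IsAlternating (qminor t B u) := by
  induction B generalizing u with
  | nil => intro X a b Y; cases X <;> simp [qminor]
  | cons c B ih => exact (ih _).wedge _

theorem IsRTT.const_mul_creation (ht : IsRTT t) (k : I) (b c : J) (u v : K) (F : List I → R) :
    (u - v) • (κ (t k b u) * creation t c v F - creation t c v (κ (t k b u) * F)) =
      creation t b u (κ (t k c v) * F) - creation t b v (κ (t k c u) * F) := by
  simp only [creation, ← wedge_const_mul_left, ← wedge_mul_const_left, ← LinearMap.map_sub₂,
    ← LinearMap.map_smul₂]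
  exact congrArg (wedge K · F) (funext fun i ↦ ht k b i c u v)

theorem IsRTT.creation_const_mul (ht : IsRTT t) (k : I) (b c : J) (u v : K) (F : List I → R) :
    (u - v) • (creation t b u (κ (t k c v) * F) - κ (t k c v) * creation t b u F) =
      κ (t k b u) * creation t c v F - κ (t k b v) * creation t c u F := by
  simp only [creation, ← wedge_const_mul_left, ← wedge_mul_const_left, ← LinearMap.map_sub₂,
    ← LinearMap.map_smul₂]
  exact congrArg (wedge K · F) (funext fun i ↦ ht i b k c u v)

theorem creation_cons (b : J) (u : K) (F : List I → R) (a : I) (A : List I) :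
    creation t b u F (a :: A) = t a b u * F A - creation t b u (contract K a F) A := rfl

theorem contract_creation (k : I) (b : J) (u : K) (F : List I → R) :
    contract K k (creation t b u F) = κ (t k b u) * F - creation t b u (contract K k F) := rfl

theorem IsRTT.creation_creation (ht : IsRTT t) (b c : J) (u v : K) (F : List I → R) :
    (u - v) • (creation t b u (creation t c v F) + creation t c v (creation t b u F)) =
      creation t b v (creation t c u F) - creation t b u (creation t c v F) := by
  ext A
  induction A generalizing F with
  | nil => simp [creation]
  | cons a A ih =>
    have h₁ := congrFun (ht.const_mul_creation a b c u v F) A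
    have h₂ := congrFun (ht.creation_const_mul a b c u v F) A
    have h₃ := ih (contract K a F)
    simp only [Pi.smul_apply, Pi.add_apply, Pi.sub_apply, Pi.mul_apply, Function.const_apply]
      at h₁ h₂ h₃
    simp only [Pi.smul_apply, Pi.add_apply, Pi.sub_apply, creation_cons, contract_creation,
      map_sub]
    linear_combination (norm := module) h₁ - h₂ + h₃

/-- The sum of the quantum minors in which one column of `B` is replaced by `b`, weighted on the
right by the value of `h` at the column replaced. -/
def replaceSum (t : I → J → K → R) (b : J) (h : J → R) (B : List J) (u : K) : List I → R :=
  ∑ s : Fin B.length, qminor t (B.set s b) u * κ (h B[s])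

theorem replaceSum_cons (b : J) (h : J → R) (c : J) (B : List J) (u : K) :
    (replaceSum t b h (c :: B) u : List I → R) =
      qminor t (b :: B) u * κ (h c) + creation t c u (replaceSum t b h B (u - 1)) := by
  simp [replaceSum, Fin.sum_univ_succ, creation_mul_const, qminor_cons]

theorem replaceSum_append_of_eq_zero (b : J) {h : J → R} {C : List J} (hC : ∀ e ∈ C, h e = 0)
    (B : List J) (u : K) : (replaceSum t b h (C ++ B) u : List I → R) =
      ∑ s : Fin B.length, qminor t (C ++ B.set s b) u * κ (h B[s]) := by
  induction C generalizing u with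
  | nil => rfl
  | cons c C ih =>
    rw [List.cons_append, replaceSum_cons, ih (fun e he ↦ hC e (by simp [he])), hC c (by simp)]
    simp [creation_mul_const, qminor_cons]

theorem replaceSum_wedge (b : J) (h : I → J → R) (G : List I → R) (B : List J) (u : K)
    (A A' : List I) : replaceSum t b (fun e ↦ wedge K (fun i ↦ h i e) G A') B u A =
      wedge K (fun i ↦ replaceSum t b (h i) B u A) G A' := by
  have hsum : (fun i ↦ replaceSum t b (h i) B u A) =
      ∑ s : Fin B.length, κ (qminor t (B.set s b) u A) * fun i ↦ h i B[s] := by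
    ext i
    simp [replaceSum]
  rw [hsum]
  simp [replaceSum, wedge_const_mul_left, LinearMap.sum_apply]

end RTT

section GenericCommutation

variable {K I J R : Type*} [Field K] [CharZero K] [Ring R] [Algebra K R] {t : I → J → K → R}

local notation "κ" => Function.const _

theorem IsRTT.creation_creation_sub_one (ht : IsRTT t) (b c : J) (u : K) (F : List I → R) :
    creation t b u (creation t c (u - 1) F) = -creation t c u (creation t b (u - 1) F) := by
  have hbc := ht.creation_creation b c u (u - 1) F
  have hcb := ht.creation_creation c b u (u - 1) F
  rw [sub_sub_cancel] at hbc hcb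
  linear_combination (norm := module) (2⁻¹ : K) • (hbc + hcb)

theorem IsRTT.isAlternating_qminor (ht : IsRTT t) (u : K) :
    IsAlternating fun B ↦ (qminor t B u : List I → R) := by
  intro X
  induction X generalizing u with
  | nil => exact fun a b Y ↦ ht.creation_creation_sub_one a b u _
  | cons x X ih =>
    exact fun a b Y ↦ (congrArg (creation t x u) (ih (u - 1) a b Y)).trans (map_neg _ _)

theorem IsRTT.creation_replaceSum (ht : IsRTT t) (b c : J) (h : J → R) (B : List J) (u : K) :
    (creation t b u (replaceSum t c h B (u - 1)) : List I → R) =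
      -creation t c u (replaceSum t b h B (u - 1)) := by
  simp only [replaceSum, map_sum, creation_mul_const, ← qminor_cons, ← Finset.sum_neg_distrib]
  refine Finset.sum_congr rfl fun s _ ↦ ?_
  rw [(ht.isAlternating_qminor u).cons_set b c s.isLt, neg_mul]

theorem IsRTT.replaceSum_of_mem (ht : IsRTT t) (h : J → R) {b : J} {B : List J} (hb : b ∈ B)
    (u : K) : (replaceSum t b h B u : List I → R) = qminor t B u * κ (h b) := by
  have : IsAddTorsionFree (List I → R) := .of_isTorsionFree K _
  induction B generalizing u with
  | nil => simp at hb
  | cons c B ih =>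
    rw [replaceSum_cons]
    by_cases hbc : b = c
    · subst hbc
      rw [self_eq_neg.1 (ht.creation_replaceSum b b h B u), add_zero]
    · have hbB : b ∈ B := by simpa [hbc] using hb
      rw [ih hbB, (ht.isAlternating_qminor u).cons_eq_zero hbB, creation_mul_const, zero_mul,
        zero_add, qminor_cons]

theorem IsRTT.bracket_qminor (ht : IsRTT t) (k : I) (b : J) (B : List J) {u v : K}
    (hd : ∀ m : ℕ, u - v + (m + 1) ≠ 0) :
    (u - v) • (κ (t k b u) * qminor t B v - qminor t B v * κ (t k b u)) =
      creation t b u (contract K k (qminor t B v)) - replaceSum t b (t k · u) B v := by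
  induction B generalizing b v with
  | nil =>
    ext A
    have hk : contract K k (qminor t [] v) = 0 := rfl
    rw [hk, map_zero]
    cases A <;> simp [replaceSum, qminor]
  | cons c B ih =>
    have hne : u - (v - 1) ≠ 0 := by simpa [sub_sub_eq_add_sub, add_sub_right_comm] using hd 0
    have hd' (m : ℕ) : u - (v - 1) + (m + 1) ≠ 0 := by
      convert hd (m + 1) using 1
      push_cast
      ring
    have ih' (b e : J) := congrArg (creation t e v) (ih b hd')
    have hbc := ih' b c
    have hcb := ih' c b
    have hb := ht.const_mul_creation k b c u v (qminor t B (v - 1))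
    have hcontract := ht.creation_creation b c u v (contract K k (qminor t B (v - 1)))
    have hswap := ht.creation_replaceSum b c (t k · u) B v
    simp only [map_smul, map_sub, creation_mul_const] at hbc hcb
    rw [qminor_cons, contract_creation, map_sub, replaceSum_cons, qminor_cons]
    refine smul_right_injective _ hne ?_
    linear_combination (norm := module)
      (u - (v - 1)) • hb + (u - v) • hbc - hcb + hcontract + hswap

theorem IsRTT.mul_qminor (ht : IsRTT t) (hp : ∀ i j, t i j ∈ polynomialMap K R) {k : I}
    {A : List I} (hk : k ∈ A) (b : J) (B : List J) (u v : K) :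
    (u - v - 1) • (t k b u * qminor t B v A) =
      (u - v) • (qminor t B v A * t k b u) - replaceSum t b (t k · u) B v A := by
  have : IsAddTorsionFree R := .of_isTorsionFree K R
  let f (z : K) := (z - (v + 1)) • (t k b z * qminor t B v A) -
    ((z - v) • (qminor t B v A * t k b z) - replaceSum t b (t k · z) B v A)
  have hsum (z : K) : replaceSum t b (t k · z) B v A =
      (∑ s : Fin B.length, fun z ↦ qminor t (B.set s b) v A * t k B[s] z) z := by
    simp [replaceSum]
  have hf : f ∈ polynomialMap K R := by
    have hl (x : R) (c : J) : (fun z ↦ x * t k c z) ∈ polynomialMap K R :=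
      linearMap_comp_mem_polynomialMap (.mulLeft K x) (hp k c)
    simp only [f, hsum]
    exact sub_mem (sub_smul_mem_polynomialMap _
        (linearMap_comp_mem_polynomialMap (.mulRight K _) (hp k b)))
      (sub_mem (sub_smul_mem_polynomialMap _ (hl _ _)) (sum_mem fun s _ ↦ hl _ _))
  have hzero (m : ℕ) : f (v + m) = 0 := by
    have hd (j : ℕ) : v + m - v + (j + 1) ≠ 0 := by
      rw [add_sub_cancel_left]
      exact_mod_cast Nat.succ_ne_zero (m + j)
    have hbracket := congrFun (ht.bracket_qminor k b B hd) A
    have hwedge : creation t b (v + m) (contract K k (qminor t B v)) A = _ :=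
      (isAlternating_qminor_rows B v).wedge_contract _ hk
    simp only [Pi.smul_apply, Pi.sub_apply, Pi.mul_apply, Function.const_apply, hwedge]
      at hbracket
    linear_combination (norm := module) hbracket
  have hinf : {z | f z = 0}.Infinite := Set.infinite_of_injective_forall_mem
    (fun m n h ↦ Nat.cast_injective (add_left_cancel h)) hzero
  rw [sub_sub]
  exact sub_eq_zero.1 (congrFun (eq_zero_of_infinite_zeros hf hinf) u)

theorem IsRTT.commute_qminor_of_mem (ht : IsRTT t) (hp : ∀ i j, t i j ∈ polynomialMap K R) {k : I}
    {A : List I} (hk : k ∈ A) {b : J} {B : List J} (hb : b ∈ B) (u v : K) :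
    Commute (t k b u) (qminor t B v A) := by
  let f (z : K) := t k b z * qminor t B v A - qminor t B v A * t k b z
  have hf : f ∈ polynomialMap K R := sub_mem
    (linearMap_comp_mem_polynomialMap (.mulRight K _) (hp k b))
    (linearMap_comp_mem_polynomialMap (.mulLeft K _) (hp k b))
  have hzero : {v + 1}ᶜ ⊆ {z | f z = 0} := fun z hz ↦ by
    have h := ht.mul_qminor hp hk b B z v
    rw [ht.replaceSum_of_mem _ hb] at h
    have hne : z - v - 1 ≠ 0 := by rwa [sub_sub, sub_ne_zero]
    refine (smul_eq_zero.1 ?_).resolve_left hne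
    simp only [Pi.mul_apply, Function.const_apply] at h
    linear_combination (norm := module) h
  exact sub_eq_zero.1 <| congrFun
    (eq_zero_of_infinite_zeros hf ((Set.finite_singleton _).infinite_compl.mono hzero)) u

theorem IsRTT.commute_qminor (ht : IsRTT t) (hp : ∀ i j, t i j ∈ polynomialMap K R)
    {A A' : List I} (hA : A' ⊆ A) {B C : List J} (hC : C ⊆ B) (u v : K) :
    Commute (qminor t C u A') (qminor t B v A) := by
  induction C generalizing u A' with
  | nil => cases A' <;> simp [qminor]
  | cons c C ih =>
    have hc : c ∈ B := hC (by simp)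
    calc creation t c u (qminor t C (u - 1)) A' * qminor t B v A
        = creation t c u (qminor t C (u - 1) * κ (qminor t B v A)) A' := by
          rw [creation_mul_const]; rfl
      _ = creation t c u (κ (qminor t B v A) * qminor t C (u - 1)) A' :=
          wedge_congr (fun _ _ ↦ rfl)
            fun A'' hA'' ↦
              (ih (List.Subset.trans hA'' hA) (List.subset_of_cons_subset hC) (u - 1)).eq
      _ = wedge K (κ (qminor t B v A) * (t · c u)) (qminor t C (u - 1)) A' := by
          rw [creation, ← wedge_mul_const_left]
          exact wedge_congr (fun i hi ↦ ht.commute_qminor_of_mem hp (hA hi) hc u v) fun _ _ ↦ rfl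
      _ = qminor t B v A * creation t c u (qminor t C (u - 1)) A' := by
          rw [wedge_const_mul_left]; rfl

theorem IsRTT.qminor_cons_mul_qminor (ht : IsRTT t) (hp : ∀ i j, t i j ∈ polynomialMap K R)
    {A A' : List I} (hA : A' ⊆ A) {B C : List J} (hC : C ⊆ B) (q : J) (u v : K) :
    (u - v - 1) • (qminor t (q :: C) u A' * qminor t B v A) =
      (u - v) • (qminor t B v A * qminor t (q :: C) u A') -
        replaceSum t q (fun e ↦ qminor t (e :: C) u A') B v A := by
  set N := qminor t B v A
  set G := qminor t C (u - 1)
  have hleft : qminor t (q :: C) u A' * N = wedge K ((t · q u) * κ N) G A' := by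
    rw [wedge_mul_const_left]
    calc qminor t (q :: C) u A' * N = wedge K (t · q u) (G * κ N) A' := by
          rw [wedge_mul_const]; rfl
      _ = wedge K (t · q u) (κ N * G) A' := wedge_congr (fun _ _ ↦ rfl)
          fun A'' hA'' ↦ (ht.commute_qminor hp (List.Subset.trans hA'' hA) hC (u - 1) v).eq
  have hright : N * qminor t (q :: C) u A' = wedge K (κ N * (t · q u)) G A' := by
    rw [wedge_const_mul_left]; rfl
  calc (u - v - 1) • (qminor t (q :: C) u A' * N)
      = wedge K ((u - v - 1) • ((t · q u) * κ N)) G A' := by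
        rw [hleft, LinearMap.map_smul₂, Pi.smul_apply]
    _ = wedge K ((u - v) • (κ N * (t · q u)) - fun i ↦ replaceSum t q (t i · u) B v A) G A' :=
        wedge_congr (fun i hi ↦ ht.mul_qminor hp (hA hi) q B u v) fun _ _ ↦ rfl
    _ = _ := by
        rw [LinearMap.map_sub₂, LinearMap.map_smul₂, Pi.sub_apply, Pi.smul_apply, ← hright,
          ← replaceSum_wedge]
        rfl

theorem IsRTT.qminor_concat_mul_qminor_concat (ht : IsRTT t)
    (hp : ∀ i j, t i j ∈ polynomialMap K R) (A : List I) (C : List J) (q k : J) (u v : K) :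
    (u - v - 1) • (qminor t (C ++ [q]) u A * qminor t (C ++ [k]) v A) =
      (u - v) • (qminor t (C ++ [k]) v A * qminor t (C ++ [q]) u A) -
        qminor t (C ++ [q]) v A * qminor t (C ++ [k]) u A := by
  have : IsAddTorsionFree (List I → R) := .of_isTorsionFree K _
  have hsign (e : J) : (qminor t (C ++ [e]) u : List I → R) =
      (-1 : ℤ) ^ C.length • qminor t (e :: C) u := by
    simpa using (ht.isAlternating_qminor u).append_cons e C []
  have hzero (e : J) (he : e ∈ C) : qminor t (e :: C) u A = 0 :=
    congrFun ((ht.isAlternating_qminor u).cons_eq_zero he) A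
  have h := ht.qminor_cons_mul_qminor hp (List.Subset.refl A) (List.subset_append_left C [k]) q u v
  rw [replaceSum_append_of_eq_zero q hzero] at h
  simp only [List.length_singleton, Fin.sum_univ_one, Fin.val_zero, List.set_cons_zero,
    Fin.getElem_fin, List.getElem_cons_zero, Pi.mul_apply, Function.const_apply] at h
  simp only [hsign, Pi.smul_apply, smul_mul_assoc, mul_smul_comm] at h ⊢
  linear_combination (norm := module) ((-1 : ℤ) ^ C.length) • h

theorem IsRTT.qminor_concat_mul_qminor_concat_self (ht : IsRTT t)
    (hp : ∀ i j, t i j ∈ polynomialMap K R) {A A' : List I} (hA : A' ⊆ A) (C : List J) (p q r : J)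
    (u : K) : qminor t (p :: (C ++ [r])) u A * qminor t (C ++ [q]) u A' =
      qminor t (p :: C) u A' * qminor t (C ++ [q, r]) u A +
        qminor t (p :: (C ++ [q])) u A * qminor t (C ++ [r]) u A' := by
  have : IsAddTorsionFree (List I → R) := .of_isTorsionFree K _
  have hcol := ht.isAlternating_qminor (I := I) u
  have hC : C ⊆ C ++ [q, r] := List.subset_append_left C [q, r]
  have hsign (e : J) (Y : List J) : (qminor t (C ++ e :: Y) u : List I → R) =
      (-1 : ℤ) ^ C.length • qminor t (e :: (C ++ Y)) u := hcol.append_cons e C Y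
  have hswap : (qminor t (C ++ [q, p]) u : List I → R) = -qminor t (C ++ [p, q]) u := hcol C q p []
  have hzero (e : J) (he : e ∈ C) : qminor t (e :: C) u A' = 0 := congrFun (hcol.cons_eq_zero he) A'
  have h := ht.qminor_cons_mul_qminor hp hA hC p u u
  rw [replaceSum_append_of_eq_zero p hzero] at h
  simp only [Fin.sum_univ_succ, List.length_cons, List.length_nil, Finset.univ_unique,
    Finset.sum_singleton, Fin.default_eq_zero, Fin.val_zero, Fin.val_succ, List.set_cons_zero,
    List.set_cons_succ, Fin.getElem_fin, List.getElem_cons_zero, List.getElem_cons_succ,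
    Pi.add_apply, Pi.mul_apply, Function.const_apply] at h
  rw [hswap, hsign p [r], hsign p [q]] at h
  rw [hsign q [], hsign r [], List.append_nil]
  simp only [Pi.neg_apply, Pi.smul_apply, smul_mul_assoc, mul_smul_comm, neg_mul] at h ⊢
  linear_combination (norm := module) h

end GenericCommutation
section MatrixUnit

variable {K I R : Type*} [CommRing K] [Ring R] [Algebra K R] [DecidableEq I] {t : I → I → K → R}

local notation "κ" => Function.const _

/-- The commutators of `e` with the generating functions `t i c v` are those of the matrix unit
`E k b` of `gl_n`, embedded in the Yangian as the coefficient `T k b` of order one. -/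
def ActsAsMatrixUnit (e : R) (k b : I) (t : I → I → K → R) : Prop :=
  ∀ i c v, e * t i c v - t i c v * e =
    (if i = b then t k c v else 0) - if k = c then t i b v else 0

theorem ActsAsMatrixUnit.bracket_creation {e : R} {k b : I} (he : ActsAsMatrixUnit e k b t) (c : I)
    (v : K) (F : List I → R) : κ e * creation t c v F - creation t c v (κ e * F) =
      wedge K (Pi.single b 1) (κ (t k c v) * F) -
        creation t b v F * κ (if k = c then 1 else 0) := by
  have hcol : κ e * (t · c v) - (t · c v) * κ e =
      Pi.single b 1 * κ (t k c v) - (t · b v) * κ (if k = c then 1 else 0) := by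
    funext i
    simpa [Pi.single_apply] using he i c v
  have h := congrArg (wedge K · F) hcol
  simp only [LinearMap.map_sub₂, wedge_const_mul_left, wedge_mul_const_left] at h
  refine h.trans ?_
  by_cases hkc : k = c
  · simp [creation, hkc]
  · simp [creation, hkc]

theorem ActsAsMatrixUnit.bracket_qminor {e : R} {k b : I} (he : ActsAsMatrixUnit e k b t)
    (B : List I) (v : K) : κ e * qminor t B v - qminor t B v * κ e =
      wedge K (Pi.single b 1) (contract K k (qminor t B v)) -
        replaceSum t b (fun c ↦ if k = c then 1 else 0) B v := by
  induction B generalizing v with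
  | nil =>
    have hk : contract K k (qminor t [] v) = 0 := rfl
    ext A
    rw [hk, map_zero]
    cases A <;> simp [replaceSum, qminor]
  | cons c B ih =>
    have hc := he.bracket_creation c v (qminor t B (v - 1))
    have hB := congrArg (creation t c v) (ih (v - 1))
    have hswap : wedge K (Pi.single b 1)
        (creation t c v (contract K k (qminor t B (v - 1)))) = -creation t c v _ :=
      wedge_wedge_of_commute
        (fun i j ↦ by obtain rfl | h := eq_or_ne i b <;> simp [*]) _
    simp only [map_sub, creation_mul_const] at hB
    rw [qminor_cons, contract_creation, map_sub, hswap, replaceSum_cons, qminor_cons]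
    linear_combination (norm := module) hc + hB

theorem ActsAsMatrixUnit.bracket_qminor_concat [IsAddTorsionFree R] {e : R} {k b : I}
    (he : ActsAsMatrixUnit e k b t) (hb : b ≠ k) {A C : List I} (hA : k ∈ A) (hC : k ∉ C) (v : K) :
    e * qminor t (C ++ [k]) v A - qminor t (C ++ [k]) v A * e = -qminor t (C ++ [b]) v A := by
  have hzero (c : I) (hc : c ∈ C) : (if k = c then (1 : R) else 0) = 0 :=
    if_neg (by rintro rfl; exact hC hc)
  have h := congrFun (he.bracket_qminor (C ++ [k]) v) A
  rw [Pi.sub_apply, Pi.sub_apply, (isAlternating_qminor_rows _ v).wedge_contract _ hA,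
    replaceSum_append_of_eq_zero b hzero] at h
  simpa [hb.symm] using h

end MatrixUnit

section RisingProd

variable {K R : Type*} [CommRing K] [Ring R]

/-- The product `x (v + k - 1) ⋯ x (v + 1) x v` of `k` factors; it generalises `TTPoly`. -/
def risingProd (x : K → R) (v : K) : ℕ → R
  | 0 => 1
  | k + 1 => x (v + k) * risingProd x v k

theorem risingProd_succ (x : K → R) (v : K) (k : ℕ) :
    risingProd x v (k + 1) = x (v + k) * risingProd x v k := rfl

theorem risingProd_succ' (x : K → R) (v : K) (k : ℕ) :
    risingProd x v (k + 1) = risingProd x (v + 1) k * x v := by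
  induction k with
  | zero => simp [risingProd]
  | succ k ih =>
    rw [risingProd_succ, ih, risingProd_succ x (v + 1) k, mul_assoc, Nat.cast_succ, add_assoc v 1,
      add_comm (1 : K)]

theorem commute_risingProd {x : K → R} (hx : ∀ u v, Commute (x u) (x v)) (u v : K) (k : ℕ) :
    Commute (x u) (risingProd x v k) := by
  induction k with
  | zero => exact .one_right _
  | succ k ih => exact (hx _ _).mul_right ih

theorem bracket_risingProd [Algebra K R] {e : R} {x y : K → R} (hx : ∀ u v, Commute (x u) (x v))
    (hxy : ∀ u v, (u - v - 1) • (x u * y v) = (u - v) • (y v * x u) - x v * y u)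
    (he : ∀ v, e * x v - x v * e = -y v) (v : K) (k : ℕ) :
    e * risingProd x v (k + 1) - risingProd x v (k + 1) * e =
      -((k : K) + 1) • (risingProd x v k * y (v + k)) := by
  induction k generalizing v with
  | zero => simp [risingProd, he]
  | succ k ih =>
    have hsucc : v + ((k + 1 : ℕ) : K) = v + 1 + k := by push_cast; ring
    obtain ⟨w, hw⟩ : ∃ w, w = v + 1 + k := ⟨_, rfl⟩
    have hlast : risingProd x (v + 1) (k + 1) = risingProd x (v + 1) k * x w := by
      rw [hw]
      exact (commute_risingProd hx _ _ _).eq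
    have hih := congrArg (· * x v) (ih (v + 1))
    have hev := congrArg (risingProd x (v + 1) k * x w * ·) (he v)
    have hxyv := congrArg (risingProd x (v + 1) k * ·) (hxy v w)
    have hvw : v - w = -(k + 1) := by rw [hw]; ring
    rw [← hw, hlast] at hih
    rw [risingProd_succ' x v (k + 1), risingProd_succ' x v k, hsucc, ← hw, hlast]
    simp only [hvw, mul_sub, sub_mul, mul_smul_comm, smul_mul_assoc, mul_neg, mul_assoc]
      at hih hev hxyv ⊢
    linear_combination (norm := (push_cast; module)) hih + hev - hxyv

end RisingProd

section QuantumMinor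

variable {K I J R : Type*} [CommRing K] [Ring R] [Algebra K R]

/-- The quantum minor of `t` with rows `a` and columns `b`, as an alternating sum over
permutations. -/
def quantumMinor (t : I → J → K → R) {l : ℕ} (a : Fin l → I) (b : Fin l → J) (u : K) : R :=
  ∑ σ : Equiv.Perm (Fin l), ((Equiv.Perm.sign σ : ℤ) : K) •
    (List.ofFn fun s ↦ t (a (σ s)) (b s) (u - ((s : ℕ) : K))).prod

/-- The permutation of `Fin (l + 1)` taking `0` to `i` and acting on the rest as `ρ`, in terms
of the order-preserving enumeration of the complement of `i`. -/
def permCons {l : ℕ} (i : Fin (l + 1)) (ρ : Equiv.Perm (Fin l)) : Equiv.Perm (Fin (l + 1)) :=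
  i.cycleRange.symm * Equiv.Perm.decomposeFin.symm (0, ρ)

theorem permCons_zero {l : ℕ} (i : Fin (l + 1)) (ρ : Equiv.Perm (Fin l)) :
    permCons i ρ 0 = i := by
  simp [permCons]

theorem permCons_succ {l : ℕ} (i : Fin (l + 1)) (ρ : Equiv.Perm (Fin l)) (s : Fin l) :
    permCons i ρ s.succ = i.succAbove (ρ s) := by
  simp [permCons]

theorem sign_permCons {l : ℕ} (i : Fin (l + 1)) (ρ : Equiv.Perm (Fin l)) :
    Equiv.Perm.sign (permCons i ρ) = (-1) ^ (i : ℕ) * Equiv.Perm.sign ρ := by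
  simp [permCons, Equiv.Perm.decomposeFin.symm_sign]

theorem bijective_permCons (l : ℕ) :
    Function.Bijective fun p : Fin (l + 1) × Equiv.Perm (Fin l) ↦ permCons p.1 p.2 := by
  refine (Fintype.bijective_iff_injective_and_card _).2 ⟨?_, ?_⟩
  · rintro ⟨i, ρ⟩ ⟨j, π⟩ (h : permCons i ρ = permCons j π)
    obtain rfl : i = j := by simpa [permCons_zero] using congrArg (· 0) h
    simpa [permCons] using h
  · simp [Fintype.card_perm, Nat.factorial_succ]

theorem quantumMinor_eq_qminor (t : I → J → K → R) {l : ℕ} (a : Fin l → I) (b : Fin l → J)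
    (u : K) : quantumMinor t a b u = qminor t (List.ofFn b) u (List.ofFn a) := by
  induction l generalizing u with
  | zero => simp [quantumMinor, qminor]
  | succ l ih =>
    rw [List.ofFn_succ (f := b), qminor_cons, creation, wedge_ofFn, quantumMinor,
      ← (bijective_permCons l).sum_comp, Fintype.sum_prod_type]
    refine Finset.sum_congr rfl fun i _ ↦ ?_
    rw [← ih, quantumMinor, Finset.mul_sum, Finset.smul_sum]
    refine Finset.sum_congr rfl fun ρ _ ↦ ?_
    simp [permCons_zero, permCons_succ, sign_permCons, List.ofFn_succ, mul_smul, sub_sub, add_comm]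

end QuantumMinor

theorem IsRTT.bracket_risingProd_qminor_concat {K I R : Type*} [Field K] [CharZero K] [Ring R]
    [Algebra K R] [DecidableEq I] {t : I → I → K → R} (ht : IsRTT t)
    (hp : ∀ i j, t i j ∈ polynomialMap K R) {e : R} {q r : I} (he : ActsAsMatrixUnit e q r t)
    (hqr : r ≠ q) {A C : List I} (hA : q ∈ A) (hC : q ∉ C) (v : K) (k : ℕ) :
    e * risingProd (qminor t (C ++ [q]) · A) v (k + 1) -
        risingProd (qminor t (C ++ [q]) · A) v (k + 1) * e =
      -((k : K) + 1) •
        (risingProd (qminor t (C ++ [q]) · A) v k * qminor t (C ++ [r]) (v + k) A) := by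
  have : IsAddTorsionFree R := .of_isTorsionFree K R
  exact bracket_risingProd (y := (qminor t (C ++ [r]) · A))
    (ht.commute_qminor hp (List.Subset.refl A) (List.Subset.refl _))
    (ht.qminor_concat_mul_qminor_concat hp A C q r) (he.bracket_qminor_concat hqr hA hC) v k

section IndexSequence

variable {n off l m : ℕ}

theorem ofFn_idxSeq_eq_concat (hl : l = m + 1) (h : off + l ≤ n) {r : Fin n}
    (hr : (r : ℕ) = off + m) :
    List.ofFn (idxSeq n off l h) = List.ofFn (idxSeq n off m (by omega)) ++ [r] := by
  subst hl
  rw [List.ofFn_succ_last]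
  congr 2
  exact Fin.ext hr.symm

theorem ofFn_idxSeq_eq_cons (hl : l = m + 1) (h : off + l ≤ n) {p : Fin n}
    (hp : (p : ℕ) = off) {off' : ℕ} (hoff : off' = off + 1) :
    List.ofFn (idxSeq n off l h) = p :: List.ofFn (idxSeq n off' m (by omega)) := by
  subst hl hoff
  rw [List.ofFn_succ]
  congr 2
  · exact Fin.ext hp.symm
  · funext s
    exact Fin.ext (by simp [idxSeq]; omega)

theorem ofFn_idxSeqLast_eq_concat (hl : l = m + 1) (h : off + l ≤ n) (hn : 1 ≤ n) :
    List.ofFn (idxSeqLast n off l h hn) =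
      List.ofFn (idxSeq n off m (by omega)) ++ [⟨n - 1, by omega⟩] := by
  subst hl
  rw [List.ofFn_succ_last]
  congr 2
  · funext s
    exact if_neg s.isLt.ne
  · simp [idxSeqLast]

theorem mem_ofFn_idxSeq (h : off + l ≤ n) {r : Fin n} :
    r ∈ List.ofFn (idxSeq n off l h) ↔ off ≤ (r : ℕ) ∧ (r : ℕ) < off + l := by
  rw [List.mem_ofFn]
  constructor
  · rintro ⟨s, rfl⟩
    simp [idxSeq]
  · rintro ⟨hoff, hl⟩
    exact ⟨⟨r - off, by omega⟩, Fin.ext (Nat.add_sub_of_le hoff)⟩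

end IndexSequence

end Yangian

section YangianRep

open Yangian

variable {n : ℕ} {V : Type*} [AddCommGroup V] [Module ℂ V] {T : ℕ → Fin n → Fin n → V →ₗ[ℂ] V}

theorem TTPoly_eq_risingProd {r a : ℕ} (ha : 1 ≤ a) (har : a < r) (hr : r ≤ n) (v : ℂ) (k : ℕ) :
    TTPoly T r a ha har hr v k =
      risingProd (R := Module.End ℂ V) (tauPoly T r a ha har hr) v k := by
  induction k with
  | zero => rfl
  | succ k ih => rw [TTPoly, ih]; rfl

theorem Tpoly_mem_polynomialMap (T : ℕ → Fin n → Fin n → V →ₗ[ℂ] V) (i j : Fin n) :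
    Tpoly T i j ∈ polynomialMap ℂ (Module.End ℂ V) := by
  have h (m : ℕ) (w : Module.End ℂ V) := pow_smul_mem_polynomialMap (K := ℂ) m w
  convert add_mem (add_mem (h 2 (if i = j then 1 else 0)) (h 1 (T 1 i j))) (h 0 (T 2 i j)) using 1
  funext u
  simp [Tpoly, Module.End.one_eq_id]

theorem Tpoly_eq (T : ℕ → Fin n → Fin n → V →ₗ[ℂ] V) (i j : Fin n) (u : ℂ) :
    (Tpoly T i j u : Module.End ℂ V) =
      u ^ 2 • (if i = j then (1 : ℂ) else 0) • 1 + u • T 1 i j + T 2 i j := by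
  simp [Tpoly, Module.End.one_eq_id, ite_smul]

theorem IsYangianRep.zero_eq (hT : IsYangianRep n T) (i j : Fin n) :
    (T 0 i j : Module.End ℂ V) = (if i = j then (1 : ℂ) else 0) • 1 := by
  simp [hT.1 i j, Module.End.one_eq_id, ite_smul]

theorem IsYangianRep.bracket (hT : IsYangianRep n T) (r s : ℕ) (i j k l : Fin n) :
    ((T (r + 1) i j * T s k l - T s k l * T (r + 1) i j) -
        (T r i j * T (s + 1) k l - T (s + 1) k l * T r i j) : Module.End ℂ V) =
      T r k j * T s i l - T s k j * T r i l :=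
  hT.2 r s i j k l

theorem IsYangianRep.isRTT_Tpoly (hT : IsYangianRep n T)
    (hvan : ∀ r, 3 ≤ r → ∀ i j, T r i j = 0) :
    IsRTT (R := Module.End ℂ V) (Tpoly T) := by
  intro i j k l u v
  have h₃ (i j : Fin n) : (T 3 i j : Module.End ℂ V) = 0 := hvan 3 le_rfl i j
  have hrel (r s : ℕ) := hT.bracket r s i j k l
  have h00 := hrel 0 0
  have h01 := hrel 0 1
  have h02 := hrel 0 2
  have h10 := hrel 1 0
  have h11 := hrel 1 1
  have h12 := hrel 1 2
  have h20 := hrel 2 0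
  have h21 := hrel 2 1
  have h22 := hrel 2 2
  simp only [zero_add, Nat.reduceAdd, hT.zero_eq, h₃, zero_mul, mul_zero, smul_mul_assoc,
    mul_smul_comm, one_mul, mul_one] at h00 h01 h02 h10 h11 h12 h20 h21 h22
  simp only [Tpoly_eq, add_mul, mul_add, smul_mul_assoc, mul_smul_comm, one_mul, mul_one]
  -- relation `(r, s)` contributes to the coefficient of `u ^ (2 - r) * v ^ (2 - s)`
  linear_combination (norm := module) (u ^ 2 * v ^ 2) • h00 + (u ^ 2 * v) • h01 + (u ^ 2) • h02 +
    (u * v ^ 2) • h10 + (u * v) • h11 + u • h12 + (v ^ 2) • h20 + v • h21 + h22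

theorem IsYangianRep.actsAsMatrixUnit (hT : IsYangianRep n T)
    (hvan : ∀ r, 3 ≤ r → ∀ i j, T r i j = 0) (k b : Fin n) :
    ActsAsMatrixUnit (R := Module.End ℂ V) (T 1 k b) k b (Tpoly T) := by
  intro i c v
  have hrel (s : ℕ) := hT.bracket 0 s k b i c
  have h₀ := hrel 0
  have h₁ := hrel 1
  have h₂ := hrel 2
  have h₃ (i j : Fin n) : (T 3 i j : Module.End ℂ V) = 0 := hvan 3 le_rfl i j
  simp only [zero_add, Nat.reduceAdd, hT.zero_eq, h₃, mul_zero, smul_mul_assoc, mul_smul_comm,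
    one_mul, mul_one] at h₀ h₁ h₂
  have hib : (if i = b then (Tpoly T k c v : Module.End ℂ V) else 0) =
      (if i = b then (1 : ℂ) else 0) • (Tpoly T k c v : Module.End ℂ V) := by simp
  have hkc : (if k = c then (Tpoly T i b v : Module.End ℂ V) else 0) =
      (if k = c then (1 : ℂ) else 0) • (Tpoly T i b v : Module.End ℂ V) := by simp
  rw [hib, hkc]
  simp only [Tpoly_eq, add_mul, mul_add, smul_mul_assoc, mul_smul_comm, one_mul, mul_one]
  linear_combination (norm := module) (v ^ 2) • h₀ + v • h₁ + h₂

end YangianRep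

open Yangian in
theorem lowering_operator_commutation_identities_general {K R : Type*} [Field K] [CharZero K]
    [Ring R] [Algebra K R] {n : ℕ} {t : Fin n → Fin n → K → R} (ht : IsRTT t)
    (hp : ∀ i j, t i j ∈ polynomialMap K R) {a : ℕ} (ha1 : 1 ≤ a) (ha2 : a + 1 < n) {e : R}
    (he : ActsAsMatrixUnit e ⟨n - 2, by omega⟩ ⟨n - 1, by omega⟩ t) :
    (∀ k : ℕ, 1 ≤ k → ∀ v : K,
      e * risingProd (quantumMinor t (idxSeq n a (n - a) (by omega))
            (idxSeq n (a - 1) (n - a) (by omega))) v k -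
          risingProd (quantumMinor t (idxSeq n a (n - a) (by omega))
            (idxSeq n (a - 1) (n - a) (by omega))) v k * e =
        (-(k : K)) • (risingProd (quantumMinor t (idxSeq n a (n - a) (by omega))
            (idxSeq n (a - 1) (n - a) (by omega))) v (k - 1) *
          quantumMinor t (idxSeq n a (n - a) (by omega))
            (idxSeqLast n (a - 1) (n - a) (by omega) (by omega)) (v + k - 1))) ∧
    ∀ u : K,
      quantumMinor t (idxSeq n a (n - a) (by omega))
            (idxSeqLast n (a - 1) (n - a) (by omega) (by omega)) u *
          quantumMinor t (idxSeq n a (n - 1 - a) (by omega))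
            (idxSeq n a (n - 1 - a) (by omega)) u =
        quantumMinor t (idxSeq n a (n - 1 - a) (by omega))
            (idxSeq n (a - 1) (n - 1 - a) (by omega)) u *
          quantumMinor t (idxSeq n a (n - a) (by omega)) (idxSeq n a (n - a) (by omega)) u +
        quantumMinor t (idxSeq n a (n - a) (by omega)) (idxSeq n (a - 1) (n - a) (by omega)) u *
          quantumMinor t (idxSeq n a (n - 1 - a) (by omega))
            (idxSeqLast n a (n - 1 - a) (by omega) (by omega)) u := by
  let C := List.ofFn (idxSeq n a (n - 2 - a) (by omega))
  let p : Fin n := ⟨a - 1, by omega⟩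
  let q : Fin n := ⟨n - 2, by omega⟩
  let r : Fin n := ⟨n - 1, by omega⟩
  have hpC : List.ofFn (idxSeq n (a - 1) (n - 1 - a) (by omega)) = p :: C :=
    ofFn_idxSeq_eq_cons (by omega) _ (show a - 1 = _ by omega) (by omega)
  have hpCq : List.ofFn (idxSeq n (a - 1) (n - a) (by omega)) = (p :: C) ++ [q] := by
    rw [← hpC]
    exact ofFn_idxSeq_eq_concat (by omega) _ (show n - 2 = _ by omega)
  have hpCr : List.ofFn (idxSeqLast n (a - 1) (n - a) (by omega) (by omega)) =
      (p :: C) ++ [r] := by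
    rw [← hpC]
    exact ofFn_idxSeqLast_eq_concat (by omega) _ _
  have hCq : List.ofFn (idxSeq n a (n - 1 - a) (by omega)) = C ++ [q] :=
    ofFn_idxSeq_eq_concat (by omega) _ (show n - 2 = _ by omega)
  have hCr : List.ofFn (idxSeqLast n a (n - 1 - a) (by omega) (by omega)) = C ++ [r] :=
    ofFn_idxSeqLast_eq_concat (by omega) _ _
  have hCqr : List.ofFn (idxSeq n a (n - a) (by omega)) = C ++ [q] ++ [r] := by
    rw [← hCq]
    exact ofFn_idxSeq_eq_concat (by omega) _ (show n - 1 = _ by omega)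
  have hqr : r ≠ q := by simp [q, r]; omega
  have hqC : q ∉ p :: C := by simp [C, p, q, mem_ofFn_idxSeq]; omega
  refine ⟨fun k hk v ↦ ?_, fun u ↦ ?_⟩
  · obtain ⟨k, rfl⟩ := Nat.exists_eq_add_of_le' hk
    have hq : q ∈ C ++ [q] ++ [r] := by simp
    have hτ : quantumMinor t (idxSeq n a (n - a) (by omega)) (idxSeq n (a - 1) (n - a) (by omega)) =
        (qminor t (p :: C ++ [q]) · (C ++ [q] ++ [r])) :=
      funext fun u ↦ by rw [quantumMinor_eq_qminor, hpCq, hCqr]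
    rw [hτ, quantumMinor_eq_qminor, hpCr, hCqr, Nat.cast_succ, ← add_assoc, add_sub_cancel_right]
    exact ht.bracket_risingProd_qminor_concat hp he hqr hq hqC v k
  · have h := ht.qminor_concat_mul_qminor_concat_self hp
      (List.subset_append_left (C ++ [q]) [r]) C p q r u
    simpa only [quantumMinor_eq_qminor, hpC, hpCq, hpCr, hCq, hCr, hCqr, List.append_assoc,
      List.cons_append, List.nil_append] using h

/-- In a representation of `Y(gl_n)` with `T^{(r)} = 0` for
`r ≥ 3`, for `1 ≤ a < n−1`:
(i) `[E_{n−1,n}, 𝒯_{na}(v,k)] = −k · 𝒯_{na}(v,k−1) · T^{a+1⋯n}_{a⋯n−2,n}(v+k−1)`;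
(ii) `T^{a+1⋯n}_{a⋯n−2,n}(u) T^{a+1⋯n−1}_{a+1⋯n−1}(u)
  = τ_{n−1,a}(u) T^{a+1⋯n}_{a+1⋯n}(u) + τ_{na}(u) T^{a+1⋯n−1}_{a+1⋯n−2,n}(u)`. -/
theorem lowering_operator_commutation_identities
    (n : ℕ) {V : Type*} [AddCommGroup V] [Module ℂ V]
    (T : ℕ → Fin n → Fin n → (V →ₗ[ℂ] V)) (hT : IsYangianRep n T)
    (hvan : ∀ r : ℕ, 3 ≤ r → ∀ i j : Fin n, T r i j = 0)
    (a : ℕ) (ha1 : 1 ≤ a) (ha2 : a < n - 1) :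
    (∀ k : ℕ, 1 ≤ k → ∀ v : ℂ,
      T 1 ⟨n - 2, by omega⟩ ⟨n - 1, by omega⟩ ∘ₗ TTPoly T n a ha1 (by omega) (by omega) v k
          - TTPoly T n a ha1 (by omega) (by omega) v k ∘ₗ T 1 ⟨n - 2, by omega⟩ ⟨n - 1, by omega⟩
        = (-(k : ℂ)) • (TTPoly T n a ha1 (by omega) (by omega) v (k - 1) ∘ₗ
            TqminorPoly T (n - a) (idxSeq n a (n - a) (by omega))
              (idxSeqLast n (a - 1) (n - a) (by omega) (by omega)) (v + (k : ℂ) - 1))) ∧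
    (∀ u : ℂ,
      TqminorPoly T (n - a) (idxSeq n a (n - a) (by omega))
            (idxSeqLast n (a - 1) (n - a) (by omega) (by omega)) u ∘ₗ
          TqminorPoly T (n - 1 - a) (idxSeq n a (n - 1 - a) (by omega))
            (idxSeq n a (n - 1 - a) (by omega)) u
        = tauPoly T (n - 1) a ha1 (by omega) (by omega) u ∘ₗ
            TqminorPoly T (n - a) (idxSeq n a (n - a) (by omega))
              (idxSeq n a (n - a) (by omega)) u
          + tauPoly T n a ha1 (by omega) (by omega) u ∘ₗ
            TqminorPoly T (n - 1 - a) (idxSeq n a (n - 1 - a) (by omega))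
              (idxSeqLast n a (n - 1 - a) (by omega) (by omega)) u) := by
  simp only [TTPoly_eq_risingProd]
  exact lowering_operator_commutation_identities_general (R := Module.End ℂ V)
    (hT.isRTT_Tpoly hvan) (Tpoly_mem_polynomialMap T) ha1 (by omega) (hT.actsAsMatrixUnit hvan _ _)
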